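/- Let n ≥ 1, M ≥ 1, 0 < s ≤ t < 1 and λ > 0. Let τ : ℝⁿ → 𝕊ⁿ∖{N_p} be the inverse stereographic projection from the north pole N_p = (0,…,0,1) ∈ ℝ^{n+1}, given by τ(w) = (2w/(1+|w|²), (|w|²−1)/(1+|w|²)); τ is a bijection from ℝⁿ onto 𝕊ⁿ∖{N_p}. For a measurable map v : 𝕊ⁿ → ℝ^M define v_λ : 𝕊ⁿ → ℝ^M by v_λ(x) := v(τ(λ·τ⁻¹(x))) for x ≠ N_p and v_λ(N_p) := v(N_p). Let S = (0,…,0,−1) be the south pole, r_λ := 2λ/√(λ²+1), and D(S,r_λ) := {x ∈ 𝕊ⁿ : |x−S| < r_λ}. Then ∫_{𝕊ⁿ}∫_{𝕊ⁿ} |v_λ(x)−v_λ(y)|^{n/s}/|x−y|^{n+t·n/s} dμ dμ ≤ (2λ)^{n(t/s−1)} ∫_{D(S,r_λ)}∫_{𝕊ⁿ} |v(x)−v(y)|^{n/s}/|x−y|^{n+t·n/s} dμ dμ + (2/λ)^{n(t/s−1)} ∫_{𝕊ⁿ∖D(S,r_λ)}∫_{𝕊ⁿ} |v(x)−v(y)|^{n/s}/|x−y|^{n+t·n/s}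 dμ dμ, with all integrals interpreted in [0,∞]. -/

import Mathlib

open MeasureTheory Classical
open scoped ENNReal

noncomputable section

/-- Euclidean space `ℝᵏ`. -/
abbrev Euc (k : ℕ) : Type _ := EuclideanSpace ℝ (Fin k)

/-- The unit sphere `𝕊ⁿ` as a subset of `ℝ^{n+1}`. -/
def SphSet (n : ℕ) : Set (Euc (n + 1)) := Metric.sphere (0 : Euc (n + 1)) 1

/-- The north pole `N_p = (0,…,0,1)`. -/
def northPole (n : ℕ) : Euc (n + 1) := EuclideanSpace.single (Fin.last n) (1 : ℝ)

/-- The south pole `S = (0,…,0,−1)`. -/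
def southPole (n : ℕ) : Euc (n + 1) := EuclideanSpace.single (Fin.last n) (-1 : ℝ)

/-- The inverse stereographic projection from the north pole:
`τ(w) = (2w/(1+|w|²), (|w|²−1)/(1+|w|²))`. -/
def tau (n : ℕ) (w : Euc n) : Euc (n + 1) :=
  (EuclideanSpace.equiv (Fin (n + 1)) ℝ).symm fun i =>
    if h : (i : ℕ) < n then 2 * w ⟨i, h⟩ / (1 + ‖w‖ ^ 2)
    else (‖w‖ ^ 2 - 1) / (1 + ‖w‖ ^ 2)

/-- Kernel `|v(x)-v(y)|^{n/s} / |x-y|^{n + t·n/s}` in `[0,∞]`. -/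
def ker (n M : ℕ) (s t : ℝ) (v : Euc (n + 1) → Euc M) (x y : Euc (n + 1)) : ℝ≥0∞ :=
  ENNReal.ofReal (‖v x - v y‖ ^ ((n : ℝ) / s) / ‖x - y‖ ^ ((n : ℝ) + t * ((n : ℝ) / s)))

lemma tau_cast (n : ℕ) (w : Euc n) (i : Fin n) : tau n w i.castSucc = 2 * w i / (1 + ‖w‖ ^ 2) := by
  simp [tau]

lemma tau_last (n : ℕ) (w : Euc n) : tau n w (Fin.last n) = (‖w‖ ^ 2 - 1) / (1 + ‖w‖ ^ 2) := by
  simp [tau]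

lemma tau_dist (n : ℕ) (w w' : Euc n) :
    ‖tau n w - tau n w'‖ ^ 2 = 4 * ‖w - w'‖ ^ 2 / ((1 + ‖w‖ ^ 2) * (1 + ‖w'‖ ^ 2)) := by
  have e1 : ‖w - w'‖ ^ 2 = ‖w‖ ^ 2 - 2 * (∑ i, w i * w' i) + ‖w'‖ ^ 2 := by
    simp only [EuclideanSpace.real_norm_sq_eq, Finset.mul_sum, ← Finset.sum_sub_distrib,
      ← Finset.sum_add_distrib, PiLp.sub_apply]
    exact Finset.sum_congr rfl fun i _ => by ring
  have e2 : ∀ A B : ℝ, A ≠ 0 → B ≠ 0 → ∑ i, (2 * w i / A - 2 * w' i / B) ^ 2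
      = 4 / A ^ 2 * ‖w‖ ^ 2 - 8 / (A * B) * (∑ i, w i * w' i) + 4 / B ^ 2 * ‖w'‖ ^ 2 := by
    intro A B p1 p2
    rw [EuclideanSpace.real_norm_sq_eq w, EuclideanSpace.real_norm_sq_eq w']
    simp only [Finset.mul_sum, ← Finset.sum_sub_distrib, ← Finset.sum_add_distrib]
    refine Finset.sum_congr rfl fun i _ => ?_
    field_simp
    ring
  rw [EuclideanSpace.real_norm_sq_eq, Fin.sum_univ_castSucc]
  simp only [PiLp.sub_apply, tau_cast, tau_last]
  rw [e2 _ _ (by positivity) (by positivity), e1]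
  have p1 : (1 + ‖w‖ ^ 2) ≠ 0 := by positivity
  have p2 : (1 + ‖w'‖ ^ 2) ≠ 0 := by positivity
  field_simp
  ring

/-- stereographic projection -/
def sig (n : ℕ) (x : Euc (n + 1)) : Euc n :=
  WithLp.toLp 2 fun i => x i.castSucc / (1 - x (Fin.last n))

lemma sig_tau (n : ℕ) (w : Euc n) : sig n (tau n w) = w := by
  ext i
  have p1 : (1 + ‖w‖ ^ 2) ≠ 0 := by positivity
  simp only [sig, tau_cast, tau_last]
  have : 1 - (‖w‖ ^ 2 - 1) / (1 + ‖w‖ ^ 2) = 2 / (1 + ‖w‖ ^ 2) := by field_simp; ring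
  rw [this]
  field_simp

lemma sig_meas (n : ℕ) : Measurable (sig n) := by
  unfold sig
  fun_prop

lemma tau_south (n : ℕ) : southPole n = tau n 0 := by
  ext i
  refine Fin.lastCases ?_ (fun i => ?_) i
  · rw [tau_last]; simp [southPole]
  · rw [tau_cast]; simp [southPole]

lemma tau_lip (n : ℕ) : LipschitzWith 2 (tau n) := by
  refine LipschitzWith.of_dist_le_mul fun w w' => ?_
  rw [dist_eq_norm, dist_eq_norm]
  refine le_of_sq_le_sq ?_ (by positivity) 
  rw [tau_dist, div_le_iff₀ (by positivity)]
  have : 1 ≤ (1 + ‖w‖ ^ 2) * (1 + ‖w'‖ ^ 2) := by nlinarith [sq_nonneg ‖w‖, sq_nonneg ‖w'‖, mul_nonneg (sq_nonneg ‖w‖) (sq_nonneg ‖w'‖)]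
  simp only [NNReal.coe_ofNat]
  nlinarith [mul_le_mul_of_nonneg_left this (sq_nonneg ‖w-w'‖)]

lemma haus_lip {X Y : Type*} [MetricSpace X] [MeasurableSpace X] [BorelSpace X]
    [MetricSpace Y] [MeasurableSpace Y] [BorelSpace Y] (d : ℝ) (hd : 0 ≤ d)
    (U : X → Y) (j : X → ℝ) (hj : Measurable j) (A : Set X) (hA : MeasurableSet A)
    (hpos : ∀ x ∈ A, 0 < j x)
    (hU : ∀ x ∈ A, ∀ y ∈ A, dist (U x) (U y) ^ 2 ≤ j x * j y * dist x y ^ 2) :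
    μH[d] (U '' A) ≤ ∫⁻ x in A, ENNReal.ofReal (j x ^ d) ∂μH[d] := by
  have key : ∀ q : ℝ, 1 < q → μH[d] (U '' A) ≤
      ENNReal.ofReal (q ^ d) * ∫⁻ x in A, ENNReal.ofReal (j x ^ d) ∂μH[d] := by
    intro q hq
    have q0 : 0 < q := by linarith
    set B : ℤ → Set X := fun k => A ∩ j ⁻¹' (Set.Ico (q ^ k) (q ^ (k + 1))) with hB
    have hBm : ∀ k, MeasurableSet (B k) := fun k => hA.inter (hj measurableSet_Ico)
    have hAB : A = ⋃ k, B k := by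
      ext x
      simp only [hB, Set.mem_iUnion, Set.mem_inter_iff, exists_and_left]
      exact ⟨fun h => ⟨h, exists_mem_Ico_zpow (hpos x h) hq⟩, fun h => h.1⟩
    have hdisj : Pairwise (Function.onFun Disjoint B) := by
      intro k l hkl
      rw [Function.onFun, Set.disjoint_left]
      rintro x ⟨_, h1, h2⟩ ⟨_, h3, h4⟩
      have a1 := (zpow_lt_zpow_iff_right₀ hq).1 (h1.trans_lt h4)
      have a2 := (zpow_lt_zpow_iff_right₀ hq).1 (h3.trans_lt h2)
      omega
    have hk : ∀ k, μH[d] (U '' B k) ≤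
        ENNReal.ofReal (q ^ d) * ∫⁻ x in B k, ENNReal.ofReal (j x ^ d) ∂μH[d] := by
      intro k
      have hqk : 0 < q ^ (k + 1) := zpow_pos q0 _
      have hl : LipschitzOnWith (Real.toNNReal (q ^ (k + 1))) U (B k) := by
        refine LipschitzOnWith.of_dist_le_mul fun x hx y hy => ?_
        rw [Real.coe_toNNReal _ hqk.le]
        refine le_of_sq_le_sq ?_ (by positivity) 
        refine (hU x hx.1 y hy.1).trans ?_
        rw [mul_pow, sq (q ^ (k + 1))]
        gcongr
        · exact (hpos y hy.1).le
        · exact hx.2.2.le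
        · exact hy.2.2.le
      refine (hl.hausdorffMeasure_image_le hd).trans ?_
      rw [← lintegral_const_mul' _ _ ENNReal.ofReal_ne_top]
      have : ∫⁻ x in B k, ((Real.toNNReal (q ^ (k + 1)) : ℝ≥0∞)) ^ d ∂μH[d]
          = (Real.toNNReal (q ^ (k + 1)) : ℝ≥0∞) ^ d * μH[d] (B k) := by
        simp
      rw [← this]
      refine setLIntegral_mono' (hBm k) fun x hx => ?_
      rw [← ENNReal.ofReal_mul (by positivity), ← ENNReal.ofReal, ENNReal.ofReal_rpow_of_pos hqk,
        ← Real.mul_rpow q0.le (hpos x hx.1).le]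
      refine ENNReal.ofReal_le_ofReal ?_
      refine Real.rpow_le_rpow hqk.le ?_ hd
      rw [zpow_add_one₀ q0.ne', mul_comm]
      gcongr
      exact hx.2.1
    calc μH[d] (U '' A) = μH[d] (⋃ k, U '' B k) := by rw [← Set.image_iUnion, ← hAB]
      _ ≤ ∑' k, μH[d] (U '' B k) := measure_iUnion_le _
      _ ≤ ∑' k, ENNReal.ofReal (q ^ d) * ∫⁻ x in B k, ENNReal.ofReal (j x ^ d) ∂μH[d] :=
        ENNReal.tsum_le_tsum hk
      _ = _ := by
        rw [ENNReal.tsum_mul_left, ← lintegral_iUnion hBm hdisj, ← hAB]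
  have hlim : Filter.Tendsto (fun q : ℝ => ENNReal.ofReal (q ^ d) *
      ∫⁻ x in A, ENNReal.ofReal (j x ^ d) ∂μH[d]) (nhdsWithin 1 (Set.Ioi 1))
      (nhds (ENNReal.ofReal ((1:ℝ) ^ d) * ∫⁻ x in A, ENNReal.ofReal (j x ^ d) ∂μH[d])) := by
    refine ENNReal.Tendsto.mul_const ?_ (Or.inl (by simp))
    refine ENNReal.tendsto_ofReal ?_
    have : ContinuousAt (fun q : ℝ => q ^ d) 1 :=
      Real.continuousAt_rpow_const _ _ (Or.inl one_ne_zero)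
    exact this.tendsto.mono_left nhdsWithin_le_nhds
  have := ge_of_tendsto hlim (Filter.eventually_of_mem self_mem_nhdsWithin key)
  simpa using this

instance haus_finite (n : ℕ) : IsFiniteMeasureOnCompacts (μH[(n:ℝ)] : Measure (Euc n)) := by
  have : (n : ℝ) = Module.finrank ℝ (Euc n) := by simp
  rw [this]
  infer_instance

/-- the conformal dilation of the sphere -/
def dil (n : ℕ) (l : ℝ) (x : Euc (n + 1)) : Euc (n + 1) := tau n (l • sig n x)

lemma dil_meas (n : ℕ) (l : ℝ) : Measurable (dil n l) :=
  (tau_lip n).continuous.measurable.comp ((sig_meas n).const_smul l)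

/-- conformal factor of `dil n l⁻¹` -/
def cf (n : ℕ) (l : ℝ) (x : Euc (n + 1)) : ℝ := l * (1 + ‖sig n x‖ ^ 2) / (l ^ 2 + ‖sig n x‖ ^ 2)

lemma cf_meas (n : ℕ) (l : ℝ) : Measurable (cf n l) := by
  have := sig_meas n
  unfold cf
  fun_prop

lemma cf_pos (n : ℕ) (l : ℝ) (hl : 0 < l) (x : Euc (n + 1)) : 0 < cf n l x := by
  unfold cf; positivity

lemma dil_dist (n : ℕ) (l : ℝ) (hl : 0 < l) (x y : Euc (n + 1)) (hx : tau n (sig n x) = x)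
    (hy : tau n (sig n y) = y) :
    ‖dil n l⁻¹ x - dil n l⁻¹ y‖ ^ 2 = cf n l x * cf n l y * ‖x - y‖ ^ 2 := by
  conv_rhs => rw [← hx, ← hy, tau_dist]
  unfold dil
  rw [tau_dist, ← smul_sub, norm_smul, norm_smul, norm_smul]
  unfold cf
  rw [sig_tau, sig_tau]
  simp only [norm_inv, Real.norm_eq_abs, abs_of_pos hl]
  have p1 : (1 + ‖sig n x‖ ^ 2) ≠ 0 := by positivity
  have p2 : (1 + ‖sig n y‖ ^ 2) ≠ 0 := by positivity
  have p3 : (l ^ 2 + ‖sig n x‖ ^ 2) ≠ 0 := by positivity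
  have p4 : (l ^ 2 + ‖sig n y‖ ^ 2) ≠ 0 := by positivity
  field_simp

lemma dil_dil (n : ℕ) (l : ℝ) (hl : 0 < l) (x : Euc (n + 1)) (hx : tau n (sig n x) = x) :
    dil n l⁻¹ (dil n l x) = x := by
  unfold dil
  rw [sig_tau, smul_smul, inv_mul_cancel₀ hl.ne', one_smul, hx]

lemma ball_iff (n : ℕ) (l : ℝ) (hl : 0 < l) (x : Euc (n + 1)) (hx : tau n (sig n x) = x) :
    x ∈ Metric.ball (southPole n) (2 * l / Real.sqrt (l ^ 2 + 1)) ↔ ‖sig n x‖ < l := by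
  rw [Metric.mem_ball, dist_eq_norm, ← abs_of_nonneg (norm_nonneg (x - _)),
    ← abs_of_pos (show 0 < 2 * l / Real.sqrt (l ^ 2 + 1) by positivity), ← sq_lt_sq,
    div_pow, Real.sq_sqrt (by positivity)]
  conv_lhs => rw [← hx, tau_south, tau_dist]
  rw [sub_zero, norm_zero, div_lt_div_iff₀ (by positivity) (by positivity),
    ← abs_of_nonneg (norm_nonneg (sig n x)), ← abs_of_pos hl, ← sq_lt_sq]
  simp only [sq_abs, abs_of_pos hl]
  constructor <;> intro h <;> nlinarith

lemma cf_in (n : ℕ) (l : ℝ) (hl : 0 < l) (x : Euc (n + 1)) (h : ‖sig n x‖ < l) :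
    (cf n l x)⁻¹ ≤ 2 * l := by
  unfold cf
  rw [inv_div, div_le_iff₀ (by positivity)]
  have := norm_nonneg (sig n x)
  have : ‖sig n x‖ ^ 2 ≤ l ^ 2 := by gcongr
  nlinarith [mul_nonneg (sq_nonneg l) (sq_nonneg ‖sig n x‖)]

lemma cf_out (n : ℕ) (l : ℝ) (hl : 0 < l) (x : Euc (n + 1)) (h : ¬ ‖sig n x‖ < l) :
    (cf n l x)⁻¹ ≤ 2 / l := by
  unfold cf
  rw [inv_div, div_le_div_iff₀ (by positivity) (by positivity)]
  push Not at h
  have : l ^ 2 ≤ ‖sig n x‖ ^ 2 := by gcongr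
  nlinarith [mul_le_mul_of_nonneg_left this hl.le]

lemma alg_est (n p e a j k d u V : ℝ) (hj : 0 < j) (hk : 0 < k) (hd : 0 ≤ d) (hu : 0 ≤ u)
    (hV : 0 ≤ V) (hudj : u ^ 2 = j * k * d ^ 2) (ha : n - e / 2 = - (a / 2)) :
    V ^ p / u ^ e * j ^ n * k ^ n ≤
      2⁻¹ * (V ^ p / d ^ e * (j⁻¹) ^ a) + 2⁻¹ * (V ^ p / d ^ e * (k⁻¹) ^ a) := by
  have hu' : u ^ e = (j ^ (e / 2)) * k ^ (e / 2) * d ^ e := by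
    have : u = (j ^ ((1:ℝ) / 2)) * k ^ ((1:ℝ) / 2) * d := by
      rw [← sq_eq_sq₀ hu (by positivity), hudj, mul_pow, mul_pow, ← Real.rpow_mul_natCast hj.le,
        ← Real.rpow_mul_natCast hk.le]
      norm_num
    rw [this, Real.mul_rpow (by positivity) hd, Real.mul_rpow (by positivity) (by positivity),
      ← Real.rpow_mul hj.le, ← Real.rpow_mul hk.le]
    congr 3 <;> ring_nf
  have h1 : ∀ j : ℝ, 0 < j → j ^ n = j ^ (e / 2) * (j⁻¹) ^ (a / 2) := by
    intro j hj
    rw [Real.inv_rpow hj.le, ← Real.rpow_neg hj.le, ← Real.rpow_add hj]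
    congr 1; linarith
  have h2 : ∀ j : ℝ, 0 < j → (j⁻¹) ^ a = ((j⁻¹) ^ (a / 2)) ^ 2 := by
    intro j hj
    rw [← Real.rpow_mul_natCast (by positivity)]
    congr 1; push_cast; ring
  rw [hu', h1 j hj, h1 k hk, h2 j hj, h2 k hk]
  have pj : 0 < j ^ (e / 2) := by positivity
  have pk : 0 < k ^ (e / 2) := by positivity
  have e1 : V ^ p / (j ^ (e / 2) * k ^ (e / 2) * d ^ e) * (j ^ (e / 2) * (j⁻¹) ^ (a / 2)) *
      (k ^ (e / 2) * (k⁻¹) ^ (a / 2)) = V ^ p / d ^ e * ((j⁻¹) ^ (a / 2) * (k⁻¹) ^ (a / 2)) := by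
    rcases eq_or_ne (d ^ e) 0 with h | h
    · simp [h]
    · field_simp
  rw [e1]
  have e2 : 0 ≤ V ^ p / d ^ e := by positivity
  nlinarith [mul_nonneg e2 (sq_nonneg ((j⁻¹) ^ (a / 2) - (k⁻¹) ^ (a / 2)))]

lemma sph_meas (n : ℕ) : MeasurableSet (SphSet n) := Metric.isClosed_sphere.measurableSet

lemma ker_meas (n M : ℕ) (s t : ℝ) (v : Euc (n + 1) → Euc M) (hv : Measurable v) :
    Measurable (Function.uncurry (ker n M s t v)) := by
  unfold ker Function.uncurry
  fun_prop

lemma kerD_meas (n M : ℕ) (s t l : ℝ) (v : Euc (n + 1) → Euc M) (hv : Measurable v) :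
    Measurable (Function.uncurry fun x y => ENNReal.ofReal (‖v x - v y‖ ^ ((n : ℝ) / s) /
      ‖dil n l⁻¹ x - dil n l⁻¹ y‖ ^ ((n : ℝ) + t * ((n : ℝ) / s)))) := by
  have := dil_meas n l⁻¹
  unfold Function.uncurry
  fun_prop

lemma ker_symm (n M : ℕ) (s t : ℝ) (v : Euc (n + 1) → Euc M) (x y) :
    ker n M s t v x y = ker n M s t v y x := by
  unfold ker
  rw [norm_sub_rev, norm_sub_rev x]

lemma sph_sigma (n : ℕ) (hn : 1 ≤ n)
    (hst : ∀ x ∈ SphSet n \ {northPole n}, tau n (sig n x) = x) :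
    SigmaFinite ((μH[(n : ℝ)] : Measure (Euc (n + 1))).restrict (SphSet n)) := by
  have : NullSingletonClass (μH[(n : ℝ)] : Measure (Euc (n + 1))) := 
    Measure.nullSingletonClass_hausdorff _ (by exact_mod_cast hn)
  refine ⟨⟨⟨fun k => tau n '' (Metric.closedBall 0 k) ∪ ({northPole n} ∪ (SphSet n)ᶜ),
    fun _ => trivial, fun k => ?_, ?_⟩⟩⟩
  · refine (measure_union_le _ _).trans_lt (ENNReal.add_lt_top.2 ⟨?_, ?_⟩)
    · refine (Measure.restrict_apply_le _ _).trans_lt ?_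
      refine ((tau_lip n).hausdorffMeasure_image_le (by positivity) _).trans_lt ?_
      refine ENNReal.mul_lt_top (by simp) ?_
      exact (isCompact_closedBall _ _).measure_lt_top
    · refine (measure_union_le _ _).trans_lt (ENNReal.add_lt_top.2 ⟨?_, ?_⟩)
      · simp
      · rw [Measure.restrict_apply (sph_meas n).compl]; simp
  · refine Set.eq_univ_of_forall fun x => ?_
    rw [Set.mem_iUnion]
    by_cases hx : x ∈ SphSet n \ {northPole n}
    · obtain ⟨k, hk⟩ := exists_nat_ge ‖sig n x‖
      exact ⟨k, Or.inl ⟨sig n x, by simpa using hk, hst x hx⟩⟩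
    · refine ⟨0, Or.inr ?_⟩
      by_contra h
      simp only [Set.mem_union, Set.mem_singleton_iff, Set.mem_compl_iff, not_or, not_not] at h
      exact hx ⟨h.2, h.1⟩

lemma map_le (n : ℕ) (hn : 1 ≤ n) (l : ℝ) (hl : 0 < l)
    (hmem : ∀ w : Euc n, tau n w ∈ SphSet n \ {northPole n})
    (hst : ∀ x ∈ SphSet n \ {northPole n}, tau n (sig n x) = x) :
    ((μH[(n : ℝ)] : Measure (Euc (n + 1))).restrict (SphSet n)).map (dil n l) ≤
      ((μH[(n : ℝ)] : Measure (Euc (n + 1))).restrict (SphSet n)).withDensity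
        (fun x => ENNReal.ofReal (cf n l x ^ (n : ℝ))) := by
  have : NullSingletonClass (μH[(n : ℝ)] : Measure (Euc (n + 1))) := 
    Measure.nullSingletonClass_hausdorff _ (by exact_mod_cast hn)
  refine Measure.le_iff.2 fun B hB => ?_
  have hA : MeasurableSet (B ∩ (SphSet n \ {northPole n})) :=
    hB.inter ((sph_meas n).diff (measurableSet_singleton _))
  rw [Measure.map_apply (dil_meas n l) hB, withDensity_apply _ hB,
    Measure.restrict_apply (dil_meas n l hB), Measure.restrict_restrict hB]
  calc μH[(n : ℝ)] (dil n l ⁻¹' B ∩ SphSet n)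
      ≤ μH[(n : ℝ)] (dil n l⁻¹ '' (B ∩ (SphSet n \ {northPole n})) ∪ {northPole n}) := by
        refine measure_mono fun x hx => ?_
        by_cases h : x = northPole n
        · exact Or.inr h
        · exact Or.inl ⟨dil n l x, ⟨hx.1, hmem _⟩, dil_dil n l hl x (hst x ⟨hx.2, h⟩)⟩
    _ ≤ μH[(n : ℝ)] (dil n l⁻¹ '' (B ∩ (SphSet n \ {northPole n}))) := by
        refine (measure_union_le _ _).trans ?_
        simp
    _ ≤ ∫⁻ x in B ∩ (SphSet n \ {northPole n}), ENNReal.ofReal (cf n l x ^ (n : ℝ)) ∂μH[(n:ℝ)] := by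
        refine haus_lip _ (by positivity) _ _ (cf_meas n l) _ hA (fun x _ => cf_pos n l hl x) ?_
        intro x hx y hy
        rw [dist_eq_norm, dist_eq_norm, dil_dist n l hl x y (hst x hx.2) (hst y hy.2)]
    _ ≤ _ := lintegral_mono_set (Set.inter_subset_inter_right _ Set.sdiff_subset)

lemma abs_est {X : Type*} [MeasurableSpace X] (μ : Measure X) [SigmaFinite μ] (P : X → Prop)
    (hae : ∀ᵐ x ∂μ, P x) (T : X → X) (hT : Measurable T) (g k : X → ℝ≥0∞) (hgm : Measurable g)
    (hkm : Measurable k) (hmap : μ.map T ≤ μ.withDensity g) (K H : X → X → ℝ≥0∞)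
    (hKm : Measurable (Function.uncurry K)) (hHm : Measurable (Function.uncurry H))
    (hsymm : ∀ x y, K x y = K y x)
    (hpt : ∀ x, P x → ∀ y, P y →
      g x * (g y * H x y) ≤ 2⁻¹ * (K x y * k x) + 2⁻¹ * (K x y * k y)) :
    ∫⁻ x, ∫⁻ y, H (T x) (T y) ∂μ ∂μ ≤ ∫⁻ x, k x * ∫⁻ y, K x y ∂μ ∂μ := by
  have hHm1 : ∀ x, Measurable (H x) := fun x => hHm.comp measurable_prodMk_left
  have hcv : ∀ f : X → ℝ≥0∞, Measurable f →
      ∫⁻ x, f (T x) ∂μ ≤ ∫⁻ x, g x * f x ∂μ := by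
    intro f hf
    rw [← lintegral_map hf hT]
    refine (lintegral_mono' hmap le_rfl).trans_eq ?_
    rw [lintegral_withDensity_eq_lintegral_mul _ hgm hf]
    rfl
  have hF : Measurable fun x => ∫⁻ y, g y * H x y ∂μ := by
    have h0 : Measurable (Function.uncurry fun x y => g y * H x y) :=
      (hgm.comp measurable_snd).mul hHm
    exact h0.lintegral_prod_right
  have hm1 : Measurable (Function.uncurry fun x y => K x y * k x) :=
    hKm.mul (hkm.comp measurable_fst)
  have hm2 : Measurable (Function.uncurry fun x y => K x y * k y) :=
    hKm.mul (hkm.comp measurable_snd)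
  have hsw : ∫⁻ x, ∫⁻ y, K x y * k y ∂μ ∂μ = ∫⁻ x, ∫⁻ y, K x y * k x ∂μ ∂μ := by
    rw [lintegral_lintegral_swap hm2.aemeasurable]
    refine lintegral_congr fun y => lintegral_congr fun x => ?_
    rw [hsymm]
  calc ∫⁻ x, ∫⁻ y, H (T x) (T y) ∂μ ∂μ
    _ ≤ ∫⁻ x, ∫⁻ y, g y * H (T x) y ∂μ ∂μ :=
        lintegral_mono fun x => hcv _ (hHm1 _)
    _ ≤ ∫⁻ x, g x * ∫⁻ y, g y * H x y ∂μ ∂μ := hcv _ hF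
    _ = ∫⁻ x, ∫⁻ y, g x * (g y * H x y) ∂μ ∂μ :=
        lintegral_congr fun x => (lintegral_const_mul _ (hgm.mul (hHm1 x))).symm
    _ ≤ ∫⁻ x, ∫⁻ y, (2⁻¹ * (K x y * k x) + 2⁻¹ * (K x y * k y)) ∂μ ∂μ := by
        refine lintegral_mono_ae ?_
        filter_upwards [hae] with x hx
        refine lintegral_mono_ae ?_
        filter_upwards [hae] with y hy using hpt x hx y hy
    _ = 2⁻¹ * (∫⁻ x, ∫⁻ y, K x y * k x ∂μ ∂μ) + 2⁻¹ * (∫⁻ x, ∫⁻ y, K x y * k y ∂μ ∂μ) := by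
        have i1 : ∀ x, Measurable fun y => K x y * k x := fun x => hm1.comp measurable_prodMk_left
        have i2 : ∀ x, Measurable fun y => K x y * k y := fun x => hm2.comp measurable_prodMk_left
        have o1 : Measurable fun x => ∫⁻ y, K x y * k x ∂μ := hm1.lintegral_prod_right'
        have o2 : Measurable fun x => ∫⁻ y, K x y * k y ∂μ := hm2.lintegral_prod_right'
        rw [← lintegral_const_mul _ o1, ← lintegral_const_mul _ o2,
          ← lintegral_add_left (o1.const_mul _)]
        refine lintegral_congr fun x => ?_
        rw [← lintegral_const_mul _ (i1 x), ← lintegral_const_mul _ (i2 x),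
          ← lintegral_add_left ((i1 x).const_mul _)]
    _ = ∫⁻ x, ∫⁻ y, K x y * k x ∂μ ∂μ := by
        rw [hsw, ← add_mul, ENNReal.inv_two_add_inv_two, one_mul]
    _ = ∫⁻ x, k x * ∫⁻ y, K x y ∂μ ∂μ := by
        refine lintegral_congr fun x => ?_
        have i3 : Measurable (K x) := hKm.comp measurable_prodMk_left
        rw [← lintegral_const_mul _ i3]
        refine lintegral_congr fun y => mul_comm _ _

/-- energy estimate for the conformal rescaling `v_λ` of a map `v` on `𝕊ⁿ`. -/
theorem stmt1 (n M : ℕ) (hn : 1 ≤ n) (hM : 1 ≤ M) (s t : ℝ)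
    (hs : 0 < s) (hst : s ≤ t) (ht : t < 1) (lam : ℝ) (hlam : 0 < lam)
    (v : Euc (n + 1) → Euc M) (hv : Measurable v)
    -- `tauInv` is the inverse of the bijection `τ : ℝⁿ → 𝕊ⁿ∖{N_p}`
    (tauInv : Euc (n + 1) → Euc n)
    (hmem : ∀ w : Euc n, tau n w ∈ SphSet n \ {northPole n})
    (hleft : ∀ w : Euc n, tauInv (tau n w) = w)
    (hright : ∀ x ∈ SphSet n \ {northPole n}, tau n (tauInv x) = x) :
    -- the rescaled map `v_λ`
    (∫⁻ x in SphSet n, ∫⁻ y in SphSet n,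
        ker n M s t
          (fun z => if z = northPole n then v (northPole n) else v (tau n (lam • tauInv z)))
          x y ∂μH[(n : ℝ)] ∂μH[(n : ℝ)])
      ≤ ENNReal.ofReal ((2 * lam) ^ ((n : ℝ) * (t / s - 1))) *
          (∫⁻ x in SphSet n ∩ Metric.ball (southPole n) (2 * lam / Real.sqrt (lam ^ 2 + 1)),
            ∫⁻ y in SphSet n, ker n M s t v x y ∂μH[(n : ℝ)] ∂μH[(n : ℝ)])
        + ENNReal.ofReal ((2 / lam) ^ ((n : ℝ) * (t / s - 1))) *
          (∫⁻ x in SphSet n \ Metric.ball (southPole n) (2 * lam / Real.sqrt (lam ^ 2 + 1)),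
            ∫⁻ y in SphSet n, ker n M s t v x y ∂μH[(n : ℝ)] ∂μH[(n : ℝ)]) := by
  have htau : ∀ x ∈ SphSet n \ {northPole n}, sig n x = tauInv x := fun x hx => by
    conv_lhs => rw [← hright x hx, sig_tau]
  have hts : ∀ x ∈ SphSet n \ {northPole n}, tau n (sig n x) = x := fun x hx => by
    rw [htau x hx, hright x hx]
  have hnoat : NullSingletonClass (μH[(n : ℝ)] : Measure (Euc (n + 1))) := 
    Measure.nullSingletonClass_hausdorff _ (by exact_mod_cast hn)
  have hsig := sph_sigma n hn hts
  have hmap := map_le n hn lam hlam hmem hts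
  have hae : ∀ᵐ x ∂((μH[(n : ℝ)] : Measure (Euc (n + 1))).restrict (SphSet n)),
      x ∈ SphSet n \ {northPole n} := by
    filter_upwards [ae_restrict_mem (sph_meas n),
      Measure.ae_ne ((μH[(n : ℝ)] : Measure (Euc (n + 1))).restrict (SphSet n)) (northPole n)]
      with x h1 h2 using ⟨h1, h2⟩
  have hbm : MeasurableSet (Metric.ball (southPole n) (2 * lam / Real.sqrt (lam ^ 2 + 1))) :=
    Metric.isOpen_ball.measurableSet
  rw [← Set.inter_comm, ← Measure.restrict_restrict hbm, Set.sdiff_eq, ← Set.inter_comm _ (SphSet n),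
    ← Measure.restrict_restrict hbm.compl]
  set D := Metric.ball (southPole n) (2 * lam / Real.sqrt (lam ^ 2 + 1)) with hD
  set μ := (μH[(n : ℝ)] : Measure (Euc (n + 1))).restrict (SphSet n) with hμ
  set a := (n : ℝ) * (t / s - 1) with ha
  have ha0 : 0 ≤ a := by
    have : 1 ≤ t / s := (one_le_div hs).2 hst
    have : 0 ≤ t / s - 1 := by linarith
    positivity
  set g : Euc (n + 1) → ℝ≥0∞ := fun x => ENNReal.ofReal (cf n lam x ^ (n : ℝ)) with hg
  have hgm : Measurable g := by
    have := cf_meas n lam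
    simp only [hg]; fun_prop
  set k : Euc (n + 1) → ℝ≥0∞ := fun x => ENNReal.ofReal ((cf n lam x)⁻¹ ^ a) with hk
  have hkm : Measurable k := by
    have := cf_meas n lam
    simp only [hk]; fun_prop
  set K := ker n M s t v with hK
  have hKm : Measurable (Function.uncurry K) := ker_meas n M s t v hv
  set H : Euc (n + 1) → Euc (n + 1) → ℝ≥0∞ := fun x y =>
    ENNReal.ofReal (‖v x - v y‖ ^ ((n : ℝ) / s) /
      ‖dil n lam⁻¹ x - dil n lam⁻¹ y‖ ^ ((n : ℝ) + t * ((n : ℝ) / s))) with hH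
  have hHm : Measurable (Function.uncurry H) := kerD_meas n M s t lam v hv
  have hpt : ∀ x ∈ SphSet n \ {northPole n}, ∀ y ∈ SphSet n \ {northPole n},
      g x * (g y * H x y) ≤ 2⁻¹ * (K x y * k x) + 2⁻¹ * (K x y * k y) := by
    intro x hx y hy
    have := alg_est n (n / s) (n + t * (n / s)) a (cf n lam x) (cf n lam y) ‖x - y‖
      ‖dil n lam⁻¹ x - dil n lam⁻¹ y‖ ‖v x - v y‖ (cf_pos n lam hlam x) (cf_pos n lam hlam y)
      (norm_nonneg _) (norm_nonneg _) (norm_nonneg _)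
      (dil_dist n lam hlam x y (hts x hx) (hts y hy)) (by rw [ha]; field_simp; ring)
    have c1 := (cf_pos n lam hlam x).le
    have c2 := (cf_pos n lam hlam y).le
    have h2 : (2⁻¹ : ℝ≥0∞) = ENNReal.ofReal 2⁻¹ := by
      rw [ENNReal.ofReal_inv_of_pos two_pos]; simp
    simp only [hg, hH, hk, hK, ker, h2]
    rw [← ENNReal.ofReal_mul (by positivity), ← ENNReal.ofReal_mul (by positivity),
      ← ENNReal.ofReal_mul (by positivity), ← ENNReal.ofReal_mul (by positivity),
      ← ENNReal.ofReal_mul (by positivity), ← ENNReal.ofReal_mul (by positivity),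
      ← ENNReal.ofReal_add (by positivity) (by positivity)]
    refine ENNReal.ofReal_le_ofReal (le_trans (le_of_eq ?_) this)
    ring
  calc _ = ∫⁻ x, ∫⁻ y, H (dil n lam x) (dil n lam y) ∂μ ∂μ := by
        refine lintegral_congr_ae ?_
        filter_upwards [hae] with x hx
        refine lintegral_congr_ae ?_
        filter_upwards [hae] with y hy
        have hx2 : ¬ x = northPole n := hx.2
        have hy2 : ¬ y = northPole n := hy.2
        simp only [ker, hH, if_neg hx2, if_neg hy2, dil_dil n lam hlam x (hts x hx),
          dil_dil n lam hlam y (hts y hy)]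
        simp only [dil, htau x hx, htau y hy]
    _ ≤ ∫⁻ x, k x * ∫⁻ y, K x y ∂μ ∂μ :=
        abs_est μ (fun x => x ∈ SphSet n \ {northPole n}) hae (dil n lam) (dil_meas n lam) g k hgm
          hkm hmap K H hKm hHm (ker_symm n M s t v) hpt
    _ = (∫⁻ x in D, k x * ∫⁻ y, K x y ∂μ ∂μ) + ∫⁻ x in Dᶜ, k x * ∫⁻ y, K x y ∂μ ∂μ :=
        (lintegral_add_compl _ hbm).symm
    _ ≤ _ := by
        have cpos := fun x => (inv_pos.2 (cf_pos n lam hlam x)).le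
        rw [← lintegral_const_mul' _ _ ENNReal.ofReal_ne_top,
          ← lintegral_const_mul' _ _ ENNReal.ofReal_ne_top]
        refine add_le_add (lintegral_mono_ae ?_) (lintegral_mono_ae ?_)
        · filter_upwards [ae_restrict_of_ae hae, ae_restrict_mem hbm] with x hx hxD
          refine mul_le_mul_left ?_ _
          exact ENNReal.ofReal_le_ofReal (Real.rpow_le_rpow (cpos x)
            (cf_in n lam hlam x ((ball_iff n lam hlam x (hts x hx)).1 hxD)) ha0)
        · filter_upwards [ae_restrict_of_ae hae, ae_restrict_mem hbm.compl] with x hx hxD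
          refine mul_le_mul_left ?_ _
          exact ENNReal.ofReal_le_ofReal (Real.rpow_le_rpow (cpos x)
            (cf_out n lam hlam x (fun h => hxD ((ball_iff n lam hlam x (hts x hx)).2 h))) ha0)
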